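/- Let F_q be a finite field with q ≥ 11 elements and let k, t be integers with k ≥ 17 and t ≥ 17. Let E′ be a codimension-1 subspace of F_q[x]_{<k}, let c ∈ F_q[x] be a polynomial of degree k − 1 + t, and let R = E′ ⊕ span(c). Define Γ := { (f_1, f_2, f_3) ∈ R³ : (f_1, f_2, f_3) ∉ E′³ and dim( span{f_1, f_2, f_3} · R ) ≤ 2k + 2 }, where span{f_1,f_2,f_3}·R is the subspace of F_q[x] spanned by all products g r with g ∈ span{f_1,f_2,f_3} and r ∈ R. Then |E′|³ / ( |E′|³ + |Γ| ) ≥ 1 − 1/q²; equivalently, a uniformly random triple (f_1, f_2, f_3) ∈ R³ with dim( span{f_1,f_2,f_3} · R ) ≤ 2k+2 lies in E′³ with probability at least 1 − 1/q². -/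

import Mathlib

open Polynomial

/-- The product of two subspaces of `F[x]`: the span of all products `f g`. -/
noncomputable def mulSpace (F : Type*) [Field F] (P R : Submodule F (Polynomial F)) :
    Submodule F (Polynomial F) :=
  Submodule.span F {x | ∃ f ∈ P, ∃ g ∈ R, x = f * g}

instance degLT_fin (F : Type*) [Field F] (n : ℕ) : Module.Finite F (Polynomial.degreeLT F n) :=
  Module.Finite.equiv (Polynomial.degreeLTEquiv F n).symm

lemma degLT_finrank (F : Type*) [Field F] (n : ℕ) :
    Module.finrank F (Polynomial.degreeLT F n) = n := by
  rw [(Polynomial.degreeLTEquiv F n).finrank_eq]; simp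

/-- dimension of the kernel and range of a two-block map -/
lemma block_dim {F A B W W' : Type*} [Field F] [AddCommGroup A] [Module F A] [AddCommGroup B]
    [Module F B] [AddCommGroup W] [Module F W] [AddCommGroup W'] [Module F W']
    [Module.Finite F A] [Module.Finite F B]
    (Φ : A × B →ₗ[F] W) (ρ : B →ₗ[F] W') (hρ : Function.Injective ρ) (U : Submodule F W')
    [Module.Finite F U]
    (hU : ∀ a b, Φ (a, b) = 0 → ρ b ∈ U) :
    Module.finrank F A + Module.finrank F B ≤
      Module.finrank F (LinearMap.range Φ) + Module.finrank F U +
        Module.finrank F (LinearMap.ker (Φ ∘ₗ LinearMap.inl F A B)) := by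
  have h1 := LinearMap.finrank_range_add_finrank_ker Φ
  rw [Module.finrank_prod] at h1
  let π : LinearMap.ker Φ →ₗ[F] W' := ρ ∘ₗ LinearMap.snd F A B ∘ₗ (LinearMap.ker Φ).subtype
  have h2 := LinearMap.finrank_range_add_finrank_ker π
  have h3 : Module.finrank F (LinearMap.range π) ≤ Module.finrank F U := by
    apply Submodule.finrank_mono
    rintro _ ⟨⟨⟨a, b⟩, h⟩, rfl⟩
    exact hU a b h
  have key : ∀ x : LinearMap.ker π, x.1.1.2 = 0 := by
    intro x
    have := x.2
    apply hρ
    rw [map_zero]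
    exact this
  have h4 : Module.finrank F (LinearMap.ker π) ≤
      Module.finrank F (LinearMap.ker (Φ ∘ₗ LinearMap.inl F A B)) := by
    let σ : LinearMap.ker π →ₗ[F] LinearMap.ker (Φ ∘ₗ LinearMap.inl F A B) :=
      LinearMap.codRestrict _ (LinearMap.fst F A B ∘ₗ (LinearMap.ker Φ).subtype ∘ₗ
        (LinearMap.ker π).subtype) (by
          intro x
          have h0 := key x
          have h5 := x.1.2
          rw [LinearMap.mem_ker] at h5 ⊢
          have : (x.1.1 : A × B) = (x.1.1.1, 0) := Prod.ext rfl h0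
          rw [this] at h5
          exact h5)
    apply LinearMap.finrank_le_finrank_of_injective (f := σ)
    intro x y hxy
    have := congrArg Subtype.val hxy
    apply Subtype.ext
    apply Subtype.ext
    exact Prod.ext this ((key x).trans (key y).symm)
  omega

/-- the syzygy space of two polynomials with high degree cofactors is small -/
lemma syz_dim {F : Type*} [Field F] {k n : ℕ} (E' : Submodule F F[X])
    (hE : E' ≤ Polynomial.degreeLT F k) (d h1 h2 : F[X]) (hd : d ≠ 0) (hco : IsCoprime h1 h2)
    (hm : (h1 ≠ 0 ∧ k ≤ h1.natDegree + n) ∨ (h2 ≠ 0 ∧ k ≤ h2.natDegree + n))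
    (S : Submodule F (E' × E'))
    (hS : ∀ x ∈ S, d * h1 * (x.1 : F[X]) + d * h2 * (x.2 : F[X]) = 0) :
    Module.finrank F S ≤ n := by
  let ι : E' × E' →ₗ[F] F[X] × F[X] := LinearMap.prodMap E'.subtype E'.subtype
  have hι : Function.Injective ι := by
    rintro ⟨a, b⟩ ⟨a', b'⟩ h
    have h1 := congrArg Prod.fst h
    have h2 := congrArg Prod.snd h
    exact Prod.ext (Subtype.ext h1) (Subtype.ext h2)
  let θ : F[X] →ₗ[F] F[X] × F[X] :=
    LinearMap.prod (LinearMap.mulLeft F (-h2)) (LinearMap.mulLeft F h1)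
  have hle : S.map ι ≤ (Polynomial.degreeLT F n).map θ := by
    rintro _ ⟨⟨b1, b2⟩, hx, rfl⟩
    have h0 := hS _ hx
    obtain ⟨u, v, huv⟩ := hco
    have hrel : h1 * (b1 : F[X]) + h2 * (b2 : F[X]) = 0 := by
      apply mul_left_cancel₀ hd
      linear_combination h0
    set s : F[X] := u * b2 - v * b1 with hs
    have e2 : h1 * s = b2 := by
      rw [hs]; linear_combination (b2 : F[X]) * huv - v * hrel
    have e1 : -h2 * s = b1 := by
      rw [hs]; linear_combination (b1 : F[X]) * huv - u * hrel
    refine ⟨s, ?_, Prod.ext e1 e2⟩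
    have d1 := Polynomial.mem_degreeLT.1 (hE b1.2)
    have d2 := Polynomial.mem_degreeLT.1 (hE b2.2)
    have aux : ∀ h : F[X], h ≠ 0 → k ≤ h.natDegree + n → (h * s).degree < (k : ℕ) →
        s ∈ Polynomial.degreeLT F n := by
      intro h hh hkn hdeg
      rw [Polynomial.mem_degreeLT]
      by_cases hs0 : s = 0
      · rw [hs0, Polynomial.degree_zero]; exact WithBot.bot_lt_coe _
      rw [Polynomial.degree_mul, Polynomial.degree_eq_natDegree hh,
        Polynomial.degree_eq_natDegree hs0] at hdeg
      rw [Polynomial.degree_eq_natDegree hs0]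
      norm_cast at hdeg ⊢
      omega
    rcases hm with ⟨hh, hk⟩ | ⟨hh, hk⟩
    · exact aux h1 hh hk (by rw [e2]; exact d2)
    · refine aux (-h2) (neg_ne_zero.2 hh) (by rwa [Polynomial.natDegree_neg]) (by rw [e1]; exact d1)
  calc Module.finrank F S = Module.finrank F (S.map ι) :=
        (LinearEquiv.finrank_eq (Submodule.equivMapOfInjective ι hι S))
    _ ≤ Module.finrank F ((Polynomial.degreeLT F n).map θ) := Submodule.finrank_mono hle
    _ ≤ Module.finrank F (Polynomial.degreeLT F n) := Submodule.finrank_map_le _ _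
    _ = n := degLT_finrank F n

lemma mulSpace_fin {F : Type*} [Field F] (P R : Submodule F F[X]) [Module.Finite F P]
    [Module.Finite F R] : Module.Finite F (mulSpace F P R) := by
  have : mulSpace F P R = P * R := by
    apply le_antisymm
    · apply Submodule.span_le.2
      rintro _ ⟨f, hf, g, hg, rfl⟩
      exact Submodule.mul_mem_mul hf hg
    · apply Submodule.mul_le.2
      intro f hf g hg
      exact Submodule.subset_span ⟨f, hf, g, hg, rfl⟩
  rw [this]
  exact Module.Finite.iff_fg.2
    (Submodule.FG.mul (Module.Finite.iff_fg.1 inferInstance) (Module.Finite.iff_fg.1 inferInstance))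

lemma key_dim {F : Type*} [Field F] {k t : ℕ} (hk : 17 ≤ k) (ht : 17 ≤ t)
    (E' R P : Submodule F F[X]) (hE : E' ≤ Polynomial.degreeLT F k)
    (hcodim : Module.finrank F E' + 1 = k) [Module.Finite F R] [Module.Finite F P]
    (hER : E' ≤ R) (hR : Module.finrank F R = k)
    (f : F[X]) (hf : f.degree = ((k - 1 + t : ℕ) : WithBot ℕ)) (hfP : f ∈ P)
    (d h1 h2 : F[X]) (hd : d ≠ 0) (hco : IsCoprime h1 h2)
    (hm : (h1 ≠ 0 ∧ k ≤ h1.natDegree + 12) ∨ (h2 ≠ 0 ∧ k ≤ h2.natDegree + 12))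
    (hg1 : d * h1 ∈ P) (hg2 : d * h2 ∈ P) (hg1E : d * h1 ∈ E') (hg2E : d * h2 ∈ E') :
    2 * k + 3 ≤ Module.finrank F (mulSpace F P R) := by
  have : Module.Finite F E' := Submodule.finiteDimensional_of_le hE
  have := mulSpace_fin P R
  let Φ : (E' × E') × R →ₗ[F] F[X] :=
    LinearMap.coprod (LinearMap.coprod (LinearMap.mulLeft F (d * h1) ∘ₗ E'.subtype)
      (LinearMap.mulLeft F (d * h2) ∘ₗ E'.subtype)) (LinearMap.mulLeft F f ∘ₗ R.subtype)
  have hΦ : ∀ b1 b2 r, Φ ((b1, b2), r) = d * h1 * (b1 : F[X]) + d * h2 * (b2 : F[X]) + f * r :=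
    fun _ _ _ => rfl
  have hB := block_dim Φ R.subtype R.injective_subtype (Polynomial.degreeLT F (k - t)) (by
    rintro ⟨b1, b2⟩ r h
    rw [hΦ] at h
    change (r : F[X]) ∈ _
    rw [Polynomial.mem_degreeLT]
    by_cases hr : (r : F[X]) = 0
    · rw [hr, Polynomial.degree_zero]; exact WithBot.bot_lt_coe _
    have hmul : ∀ a ∈ E', ∀ b ∈ E', (a * b).degree ≤ ((2 * k - 2 : ℕ) : WithBot ℕ) := by
      intro a ha b hb
      have ha := Polynomial.mem_degreeLT.1 (hE ha)
      have hb := Polynomial.mem_degreeLT.1 (hE hb)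
      by_cases ha0 : a = 0
      · simp [ha0]
      by_cases hb0 : b = 0
      · simp [hb0]
      rw [Polynomial.degree_eq_natDegree ha0] at ha
      rw [Polynomial.degree_eq_natDegree hb0] at hb
      rw [Polynomial.degree_mul, Polynomial.degree_eq_natDegree ha0,
        Polynomial.degree_eq_natDegree hb0]
      norm_cast at ha hb ⊢
      omega
    have hfr : f * r = -(d * h1 * (b1 : F[X]) + d * h2 * (b2 : F[X])) := by
      linear_combination h
    have hdeg : (f * r).degree ≤ ((2 * k - 2 : ℕ) : WithBot ℕ) := by
      rw [hfr, Polynomial.degree_neg]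
      exact (Polynomial.degree_add_le _ _).trans
        (max_le (hmul _ hg1E _ b1.2) (hmul _ hg2E _ b2.2))
    rw [Polynomial.degree_mul, hf, Polynomial.degree_eq_natDegree hr] at hdeg
    rw [Polynomial.degree_eq_natDegree hr]
    norm_cast at hdeg ⊢
    omega)
  have hS := syz_dim (n := 12) E' hE d h1 h2 hd hco hm
    (LinearMap.ker (Φ ∘ₗ LinearMap.inl F (E' × E') R)) (by
      rintro ⟨b1, b2⟩ h
      have h : Φ ((b1, b2), 0) = 0 := h
      rw [hΦ] at h
      simpa using h)
  have hrange : Module.finrank F (LinearMap.range Φ) ≤ Module.finrank F (mulSpace F P R) := by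
    apply Submodule.finrank_mono
    rintro _ ⟨⟨⟨b1, b2⟩, r⟩, rfl⟩
    rw [hΦ]
    refine add_mem (add_mem ?_ ?_) ?_
    · exact Submodule.subset_span ⟨_, hg1, _, hER b1.2, rfl⟩
    · exact Submodule.subset_span ⟨_, hg2, _, hER b2.2, rfl⟩
    · exact Submodule.subset_span ⟨_, hfP, _, r.2, rfl⟩
  rw [degLT_finrank, Module.finrank_prod] at hB
  omega

def BadSet (F : Type*) [Field F] (k : ℕ) : Set (F[X] × F[X]) :=
  ⋃ m ∈ Finset.range (k - 12), (fun x : F[X] × F[X] × F[X] => (x.1 * x.2.1, x.1 * x.2.2)) ''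
    ((Polynomial.degreeLT F (k - m) : Set F[X]) ×ˢ ((Polynomial.degreeLT F (m + 1) : Set F[X]) ×ˢ
      (Polynomial.degreeLT F (m + 1) : Set F[X])))

lemma degLT_card (F : Type*) [Field F] [Fintype F] (n : ℕ) :
    (Polynomial.degreeLT F n : Set F[X]).ncard = Fintype.card F ^ n := by
  rw [← Nat.card_coe_set_eq]
  have := Module.natCard_eq_pow_finrank (K := F) (V := Polynomial.degreeLT F n)
  rw [degLT_finrank, Nat.card_eq_fintype_card (α := F)] at this
  exact this

lemma degLT_finite (F : Type*) [Field F] [Fintype F] (n : ℕ) :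
    (Polynomial.degreeLT F n : Set F[X]).Finite := by
  have : Finite (Polynomial.degreeLT F n) := Module.finite_of_finite F
  exact Set.toFinite _

lemma bad_finite (F : Type*) [Field F] [Fintype F] (k : ℕ) : (BadSet F k).Finite := by
  refine Set.Finite.biUnion (Finset.finite_toSet _) fun m _ => Set.Finite.image _ ?_
  exact (degLT_finite F _).prod ((degLT_finite F _).prod (degLT_finite F _))

lemma bad_card (F : Type*) [Field F] [Fintype F] {k : ℕ} (hk : 17 ≤ k) :
    (BadSet F k).ncard ≤ Fintype.card F ^ (2 * k - 10) := by
  have hq : 2 ≤ Fintype.card F := Fintype.one_lt_card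
  refine (Finset.set_ncard_biUnion_le _ _).trans ?_
  calc _ ≤ ∑ m ∈ Finset.range (k - 12), Fintype.card F ^ (k + 2) * Fintype.card F ^ m := by
        apply Finset.sum_le_sum
        intro m hm
        rw [Finset.mem_range] at hm
        refine (Set.ncard_image_le ((degLT_finite F _).prod
          ((degLT_finite F _).prod (degLT_finite F _)))).trans ?_
        rw [Set.ncard_prod, Set.ncard_prod, degLT_card, degLT_card, ← pow_add, ← pow_add,
          ← pow_add]
        apply le_of_eq
        congr 1
        omega
    _ = Fintype.card F ^ (k + 2) * ∑ m ∈ Finset.range (k - 12), Fintype.card F ^ m := by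
        rw [Finset.mul_sum]
    _ ≤ Fintype.card F ^ (k + 2) * Fintype.card F ^ (k - 12) := by
        apply Nat.mul_le_mul_left
        exact (Nat.geomSum_lt hq (fun i hi => Finset.mem_range.1 hi)).le
    _ = _ := by
        rw [← pow_add]; congr 1; omega

lemma not_bad {F : Type*} [Field F] {k : ℕ} (hk : 17 ≤ k) (g1 g2 : F[X])
    (h1 : g1 ∈ Polynomial.degreeLT F k) (h2 : g2 ∈ Polynomial.degreeLT F k)
    (hb : (g1, g2) ∉ BadSet F k) : ∃ d a b : F[X], d ≠ 0 ∧ IsCoprime a b ∧ g1 = d * a ∧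
      g2 = d * b ∧ ((a ≠ 0 ∧ k ≤ a.natDegree + 12) ∨ (b ≠ 0 ∧ k ≤ b.natDegree + 12)) := by
  classical
  have mem : ∀ m < k - 12, ∀ d a b : F[X], d ∈ Polynomial.degreeLT F (k - m) →
      a ∈ Polynomial.degreeLT F (m + 1) → b ∈ Polynomial.degreeLT F (m + 1) →
      g1 = d * a → g2 = d * b → False := by
    intro m hm d a b hd ha hb' e1 e2
    apply hb
    refine Set.mem_biUnion (Finset.mem_coe.2 (Finset.mem_range.2 hm)) ⟨(d, a, b), ⟨hd, ha, hb'⟩, ?_⟩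
    rw [e1, e2]
  have h0 : ¬ (g1 = 0 ∧ g2 = 0) := by
    rintro ⟨rfl, rfl⟩
    exact mem 0 (by omega) 0 0 0 (zero_mem _) (zero_mem _) (zero_mem _) (by simp) (by simp)
  have hd : EuclideanDomain.gcd g1 g2 ≠ 0 := by
    intro h
    exact h0 (EuclideanDomain.gcd_eq_zero_iff.1 h)
  obtain ⟨a, ha⟩ := EuclideanDomain.gcd_dvd_left g1 g2
  obtain ⟨b, hb'⟩ := EuclideanDomain.gcd_dvd_right g1 g2
  have hbez := EuclideanDomain.gcd_eq_gcd_ab g1 g2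
  set d := EuclideanDomain.gcd g1 g2
  refine ⟨d, a, b, hd, ⟨EuclideanDomain.gcdA g1 g2, EuclideanDomain.gcdB g1 g2, ?_⟩, ha, hb', ?_⟩
  · apply mul_left_cancel₀ hd
    generalize EuclideanDomain.gcdA g1 g2 = u at *
    generalize EuclideanDomain.gcdB g1 g2 = v at *
    linear_combination (-1 : F[X]) * hbez - u * ha - v * hb'
  by_contra hcon
  push Not at hcon
  obtain ⟨c1, c2⟩ := hcon
  have n1 : a.natDegree < k - 12 := by
    by_cases h : a = 0
    · rw [h, Polynomial.natDegree_zero]; omega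
    · have := c1 h; omega
  have n2 : b.natDegree < k - 12 := by
    by_cases h : b = 0
    · rw [h, Polynomial.natDegree_zero]; omega
    · have := c2 h; omega
  have dk : ∀ x g : F[X], g = d * x → g ∈ Polynomial.degreeLT F k → x ≠ 0 →
      d.natDegree + x.natDegree < k := by
    intro x g hg hgk hx
    rw [Polynomial.mem_degreeLT, hg, Polynomial.degree_mul, Polynomial.degree_eq_natDegree hd,
      Polynomial.degree_eq_natDegree hx] at hgk
    exact_mod_cast hgk
  have lt : ∀ x : F[X], ∀ n : ℕ, x.natDegree < n → x ∈ Polynomial.degreeLT F n := by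
    intro x n h
    rw [Polynomial.mem_degreeLT]
    exact Polynomial.degree_le_natDegree.trans_lt (by exact_mod_cast h)
  refine mem (max a.natDegree b.natDegree) (by omega) d a b (lt _ _ ?_) (lt _ _ ?_) (lt _ _ ?_)
    ha hb'
  · have e1 := dk a g1 ha h1
    have e2 := dk b g2 hb' h2
    by_cases ha0 : a = 0
    · by_cases hb0 : b = 0
      · exact absurd ⟨by rw [ha, ha0, mul_zero], by rw [hb', hb0, mul_zero]⟩ h0
      · have := e2 hb0
        rw [ha0, Polynomial.natDegree_zero]; omega
    · have := e1 ha0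
      by_cases hb0 : b = 0
      · rw [hb0, Polynomial.natDegree_zero]; omega
      · have := e2 hb0
        omega
  · omega
  · omega

def PivSet (F : Type*) [Field F] (k : ℕ) (R : Submodule F F[X]) : Set (F[X] × F[X] × F[X]) :=
  (fun x : F[X] × (F × F) × (F[X] × F[X]) =>
    (x.1, x.2.1.1 • x.1 + x.2.2.1, x.2.1.2 • x.1 + x.2.2.2)) ''
    ((R : Set F[X]) ×ˢ ((Set.univ : Set (F × F)) ×ˢ BadSet F k))

lemma piv_card (F : Type*) [Field F] [Fintype F] {k : ℕ} (hk : 17 ≤ k) (R : Submodule F F[X])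
    [Module.Finite F R] (hR : Module.finrank F R = k) :
    (PivSet F k R).Finite ∧ (PivSet F k R).ncard ≤ Fintype.card F ^ (3 * k - 8) := by
  have : Finite R := Module.finite_of_finite F
  have hRf : (R : Set F[X]).Finite := Set.toFinite _
  have hfin : ((R : Set F[X]) ×ˢ ((Set.univ : Set (F × F)) ×ˢ BadSet F k)).Finite :=
    hRf.prod (Set.finite_univ.prod (bad_finite F k))
  refine ⟨hfin.image _, (Set.ncard_image_le hfin).trans ?_⟩
  have hRc : (R : Set F[X]).ncard = Fintype.card F ^ k := by
    rw [← Nat.card_coe_set_eq]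
    have := Module.natCard_eq_pow_finrank (K := F) (V := R)
    rw [hR, Nat.card_eq_fintype_card (α := F)] at this
    exact this
  rw [Set.ncard_prod, Set.ncard_prod, hRc, Set.ncard_univ, Nat.card_prod,
    Nat.card_eq_fintype_card]
  calc _ ≤ Fintype.card F ^ k *
        (Fintype.card F * Fintype.card F * Fintype.card F ^ (2 * k - 10)) := by
        gcongr
        exact bad_card F hk
    _ = _ := by
        rw [← pow_two, ← pow_add, ← pow_add]; congr 1; omega

lemma piv_mem {F : Type*} [Field F] {k t : ℕ} (hk : 17 ≤ k) (ht : 17 ≤ t)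
    (E' P : Submodule F F[X]) (hE : E' ≤ Polynomial.degreeLT F k)
    (hcodim : Module.finrank F E' + 1 = k) (c : F[X])
    (hc : c.degree = ((k - 1 + t : ℕ) : WithBot ℕ))
    [Module.Finite F ↥(E' ⊔ Submodule.span F {c})]
    [Module.Finite F P] (hR : Module.finrank F ↥(E' ⊔ Submodule.span F {c}) = k)
    (f f2 f3 : F[X]) (hf : f ∈ E' ⊔ Submodule.span F {c}) (hf2 : f2 ∈ E' ⊔ Submodule.span F {c})
    (hf3 : f3 ∈ E' ⊔ Submodule.span F {c}) (hfE : f ∉ E')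
    (p1 : f ∈ P) (p2 : f2 ∈ P) (p3 : f3 ∈ P)
    (hdim : Module.finrank F (mulSpace F P (E' ⊔ Submodule.span F {c})) ≤ 2 * k + 2) :
    (f, f2, f3) ∈ PivSet F k (E' ⊔ Submodule.span F {c}) := by
  have rep : ∀ r ∈ E' ⊔ Submodule.span F {c}, ∃ e ∈ E', ∃ l : F, r = e + l • c := by
    intro r hr
    obtain ⟨e, he, y, hy, rfl⟩ := Submodule.mem_sup.1 hr
    obtain ⟨l, rfl⟩ := Submodule.mem_span_singleton.1 hy
    exact ⟨e, he, l, rfl⟩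
  obtain ⟨e, he, l, hl⟩ := rep f hf
  have hl0 : l ≠ 0 := by
    rintro rfl
    apply hfE
    rw [hl, zero_smul, add_zero]; exact he
  have sub : ∀ r ∈ E' ⊔ Submodule.span F {c}, ∃ μ : F, r - μ • f ∈ E' := by
    intro r hr
    obtain ⟨e', he', l', rfl⟩ := rep r hr
    refine ⟨l' / l, ?_⟩
    have : e' + l' • c - (l' / l) • f = e' - (l' / l) • e := by
      rw [hl, smul_add, smul_smul, div_mul_cancel₀ _ hl0]; abel
    rw [this]
    exact sub_mem he' (Submodule.smul_mem _ _ he)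
  have hfd : f.degree = ((k - 1 + t : ℕ) : WithBot ℕ) := by
    have h1 : (l • c).degree = ((k - 1 + t : ℕ) : WithBot ℕ) := by
      rw [Polynomial.smul_eq_C_mul, Polynomial.degree_C_mul hl0, hc]
    rw [hl, Polynomial.degree_add_eq_right_of_degree_lt, h1]
    rw [h1]
    refine (Polynomial.mem_degreeLT.1 (hE he)).trans_le ?_
    norm_cast
    omega
  obtain ⟨μ, hμ⟩ := sub f2 hf2
  obtain ⟨ν, hν⟩ := sub f3 hf3
  by_cases hb : (f2 - μ • f, f3 - ν • f) ∈ BadSet F k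
  · refine ⟨(f, (μ, ν), (f2 - μ • f, f3 - ν • f)), ⟨hf, Set.mem_univ _, hb⟩, ?_⟩
    simp
  · exfalso
    obtain ⟨d, a, b, hd, hco, e1, e2, hm⟩ := not_bad hk _ _ (hE hμ) (hE hν) hb
    have := key_dim hk ht E' _ P hE hcodim le_sup_left hR f hfd p1 d a b hd hco hm
      (by rw [← e1]; exact sub_mem p2 (Submodule.smul_mem _ _ p1))
      (by rw [← e2]; exact sub_mem p3 (Submodule.smul_mem _ _ p1))
      (by rw [← e1]; exact hμ) (by rw [← e2]; exact hν)
    omega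

/-- For `q ≥ 11`, `k, t ≥ 17`, `E′` a codimension-1 subspace of `F_q[x]_{<k}`,
`c` of degree `k−1+t` and `R = E′ ⊕ span(c)`: letting
`Γ = {(f₁,f₂,f₃) ∈ R³ \ E′³ : dim(span{f₁,f₂,f₃}·R) ≤ 2k+2}`, one has
`|E′|³ / (|E′|³ + |Γ|) ≥ 1 − 1/q²`; i.e. a uniformly random triple in `R³` with
`dim(span{f₁,f₂,f₃}·R) ≤ 2k+2` lies in `E′³` with probability at least `1 − 1/q²`. -/
theorem stmt19 {F : Type*} [Field F] [Fintype F]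
    (hq : 11 ≤ Fintype.card F) {k t : ℕ} (hk : 17 ≤ k) (ht : 17 ≤ t)
    (E' : Submodule F (Polynomial F)) (hE : E' ≤ Polynomial.degreeLT F k)
    (hcodim : Module.finrank F E' + 1 = k)
    (c : Polynomial F) (hc : c.degree = ((k - 1 + t : ℕ) : WithBot ℕ)) :
    let R : Submodule F (Polynomial F) := E' ⊔ Submodule.span F {c}
    let Γ : Set (Polynomial F × Polynomial F × Polynomial F) :=
      {x | (x.1 ∈ R ∧ x.2.1 ∈ R ∧ x.2.2 ∈ R) ∧
        ¬(x.1 ∈ E' ∧ x.2.1 ∈ E' ∧ x.2.2 ∈ E') ∧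
        Module.finrank F (mulSpace F (Submodule.span F {x.1, x.2.1, x.2.2}) R) ≤
          2 * k + 2}
    1 - 1 / (Fintype.card F : ℚ) ^ 2 ≤
      (Nat.card E' : ℚ) ^ 3 / ((Nat.card E' : ℚ) ^ 3 + (Set.ncard Γ : ℚ)) := by
  intro R Γ
  have : Module.Finite F E' := Submodule.finiteDimensional_of_le hE
  have hRfin : Module.Finite F R := Submodule.finiteDimensional_sup _ _
  have hc0 : c ≠ 0 := by
    rintro rfl
    rw [Polynomial.degree_zero] at hc
    exact absurd hc (WithBot.bot_ne_coe)
  have hcE : c ∉ E' := by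
    intro h
    have := Polynomial.mem_degreeLT.1 (hE h)
    rw [hc] at this
    norm_cast at this
    omega
  have hR : Module.finrank F R = k := by
    have h := Submodule.finrank_sup_add_finrank_inf_eq E' (Submodule.span F {c})
    have hinf : E' ⊓ Submodule.span F {c} = ⊥ :=
      disjoint_iff.1 ((Submodule.disjoint_span_singleton' hc0).2 hcE)
    rw [hinf, finrank_bot, finrank_span_singleton hc0, add_zero, hcodim] at h
    exact h
  obtain ⟨hpf, hpc⟩ := piv_card F hk R hR
  let s2 : F[X] × F[X] × F[X] → F[X] × F[X] × F[X] := fun x => (x.2.1, x.1, x.2.2)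
  let s3 : F[X] × F[X] × F[X] → F[X] × F[X] × F[X] := fun x => (x.2.1, x.2.2, x.1)
  have hcover : Γ ⊆ PivSet F k R ∪ s2 '' PivSet F k R ∪ s3 '' PivSet F k R := by
    rintro ⟨f1, f2, f3⟩ ⟨⟨m1, m2, m3⟩, hnot, hdim⟩
    simp only at m1 m2 m3 hnot hdim
    have hPf : Module.Finite F (Submodule.span F {f1, f2, f3}) :=
      FiniteDimensional.span_of_finite F (Set.toFinite _)
    have p1 : f1 ∈ Submodule.span F {f1, f2, f3} := Submodule.subset_span (by simp)
    have p2 : f2 ∈ Submodule.span F {f1, f2, f3} := Submodule.subset_span (by simp)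
    have p3 : f3 ∈ Submodule.span F {f1, f2, f3} := Submodule.subset_span (by simp)
    by_cases n1 : f1 ∈ E'
    · by_cases n2 : f2 ∈ E'
      · have n3 : f3 ∉ E' := fun h => hnot ⟨n1, n2, h⟩
        right
        exact ⟨(f3, f1, f2), piv_mem hk ht E' _ hE hcodim c hc hR f3 f1 f2 m3 m1 m2 n3 p3 p1 p2 hdim,
          rfl⟩
      · left; right
        exact ⟨(f2, f1, f3), piv_mem hk ht E' _ hE hcodim c hc hR f2 f1 f3 m2 m1 m3 n2 p2 p1 p3 hdim,
          rfl⟩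
    · left; left
      exact piv_mem hk ht E' _ hE hcodim c hc hR f1 f2 f3 m1 m2 m3 n1 p1 p2 p3 hdim
  have hΓ : Γ.ncard ≤ 3 * Fintype.card F ^ (3 * k - 8) := by
    have a1 := Set.ncard_le_ncard hcover ((hpf.union (hpf.image s2)).union (hpf.image s3))
    have a2 := Set.ncard_union_le (PivSet F k R ∪ s2 '' PivSet F k R) (s3 '' PivSet F k R)
    have a3 := Set.ncard_union_le (PivSet F k R) (s2 '' PivSet F k R)
    have a4 := Set.ncard_image_le (f := s2) hpf
    have a5 := Set.ncard_image_le (f := s3) hpf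
    omega
  have hcardE : Nat.card E' = Fintype.card F ^ (k - 1) := by
    rw [Module.natCard_eq_pow_finrank (K := F), Nat.card_eq_fintype_card]
    congr 1
    omega
  have hmain : Fintype.card F ^ 2 * Γ.ncard ≤ Nat.card E' ^ 3 := by
    calc Fintype.card F ^ 2 * Γ.ncard
        ≤ Fintype.card F ^ 2 * (Fintype.card F * Fintype.card F ^ (3 * k - 8)) := by
          apply Nat.mul_le_mul_left
          exact hΓ.trans (Nat.mul_le_mul_right _ (by omega))
      _ = Fintype.card F ^ (3 * k - 5) := by
          rw [← pow_succ', ← pow_add]; congr 1; omega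
      _ ≤ Fintype.card F ^ ((k - 1) * 3) := Nat.pow_le_pow_right (by omega) (by omega)
      _ = _ := by rw [hcardE, ← pow_mul]
  have hN : (0 : ℚ) < (Nat.card E' : ℚ) ^ 3 := by
    rw [hcardE]
    have : 0 < Fintype.card F := by omega
    positivity
  have hq2 : (0 : ℚ) < (Fintype.card F : ℚ) ^ 2 := by
    have : 0 < Fintype.card F := by omega
    positivity
  have hmainQ : (Fintype.card F : ℚ) ^ 2 * (Γ.ncard : ℚ) ≤ (Nat.card E' : ℚ) ^ 3 := by
    exact_mod_cast hmain
  have hg : (0 : ℚ) ≤ (Γ.ncard : ℚ) := Nat.cast_nonneg _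
  generalize (Γ.ncard : ℚ) = g at *
  generalize (Nat.card E' : ℚ) ^ 3 = N at *
  generalize (Fintype.card F : ℚ) ^ 2 = Q at *
  rw [le_div_iff₀ (by linarith), one_sub_div hq2.ne', div_mul_eq_mul_div, div_le_iff₀ hq2]
  linarith
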